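/- Let N ≥ 4 and i₄, …, i_N ∈ {0,1}. Consider the chain state ⊗_{n=3}^{N} |ψ⁺⟩_{R_n L_{n+1}} (with L_{N+1} := L₁), a vector on the 2(N−2) qubits R₃, L₄, R₄, …, L_N, R_N, L₁. Applying the linear functional ⊗_{n=4}^{N} ⟨1̄_{i_n}| on the qubit pairs (L_n, R_n) yields the vector 2^{−(N−2)/2}·( v_{i₄}⋯v_{i_N} · |0⟩_{R₃}⊗|1⟩_{L₁} + u_{i₄}⋯u_{i_N} · |1⟩_{R₃}⊗|0⟩_{L₁} ) on the remaining qubit pair (R₃, L₁). -/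

import Mathlib

open MeasureTheory

noncomputable def uco (u : ℝ) : Fin 2 → ℝ := ![u, Real.sqrt (1 - u ^ 2)]
noncomputable def vco (u : ℝ) : Fin 2 → ℝ := ![Real.sqrt (1 - u ^ 2), -u]

inductive Outc where
  | zero : Outc
  | one : Fin 2 → Outc
  | two : Outc
  deriving DecidableEq, Fintype

noncomputable def psiPlus : Fin 2 → Fin 2 → ℝ := fun i j =>
  if i = 0 ∧ j = 1 then (Real.sqrt 2)⁻¹ else if i = 1 ∧ j = 0 then (Real.sqrt 2)⁻¹ else 0

noncomputable def basisVec (u : ℝ) : Outc → Fin 2 → Fin 2 → ℝ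
  | Outc.zero => fun l r => if l = 0 ∧ r = 0 then 1 else 0
  | Outc.one i => fun l r => if l = 0 ∧ r = 1 then uco u i else if l = 1 ∧ r = 0 then vco u i else 0
  | Outc.two => fun l r => if l = 1 ∧ r = 1 then 1 else 0

def finNext {N : ℕ} (k : Fin N) : Fin N := ⟨(k.val + 1) % N, Nat.mod_lt _ k.pos⟩

noncomputable def ringAmp (N : ℕ) (u : ℝ) (a : Fin N → Outc) : ℝ :=
  ∑ L : Fin N → Fin 2, ∑ R : Fin N → Fin 2,
    (∏ k, basisVec u (a k) (L k) (R k)) * ∏ k, psiPlus (R k) (L (finNext k))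

noncomputable def ringP (N : ℕ) (u : ℝ) (a : Fin N → Outc) : ℝ := ringAmp N u a ^ 2

/-- The chain of `m + 1` Bell states `⊗_{n=3}^{N} |ψ⁺⟩_{R_n L_{n+1}}` (`m = N - 3`,
`L_{N+1} = L₁`) with the functionals `⟨1̄_{i_n}|` applied on the qubit pairs
`(L_n, R_n)` of the `m` inner parties `A₄, …, A_N`; the result is a vector on the
remaining qubit pair `(R₃, L₁)`.  Inner party `k : Fin m` is `A_{4+k}`, its qubits
are `x k = L_{4+k}` and `y k = R_{4+k}`; source `s : Fin (m+1)` is `S_{3+s}`. -/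
noncomputable def chainVec (m : ℕ) (u : ℝ) (i : Fin m → Fin 2) (r₃ l₁ : Fin 2) : ℝ :=
  ∑ x : Fin m → Fin 2, ∑ y : Fin m → Fin 2,
    (∏ k, basisVec u (Outc.one (i k)) (x k) (y k)) *
      ∏ s : Fin (m + 1),
        psiPlus (if hs : (s : ℕ) = 0 then r₃ else y ⟨(s : ℕ) - 1, by have := s.isLt; omega⟩)
                (if hs : (s : ℕ) < m then x ⟨(s : ℕ), hs⟩ else l₁)

/-!
Contracting the chain is matrix multiplication: it yields `S₀ B₀ S₁ B₁ ⋯ Bₘ₋₁ Sₘ`, where `Sₛ` and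
`Bₖ` are the coefficient matrices of the sources and of the functionals. Here all of them are
antidiagonal, so every factor flips the bit along a path from `R₃` to `L₁`. Hence the product is
antidiagonal too, and each of its two entries collects the entries of the factors alternately from
above and below the diagonal.
-/

theorem sum_pi_fin_succ {M : Type*} [AddCommMonoid M] {m : ℕ} {α : Fin (m + 1) → Type*}
    [∀ k, Fintype (α k)] (f : (∀ k, α k) → M) :
    ∑ x, f x = ∑ a, ∑ x : ∀ k : Fin m, α k.succ, f (Fin.cons a x) := by
  rw [← (Fin.consEquiv α).sum_comp, Fintype.sum_prod_type]
  rfl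

/-- The contraction of a chain of `m + 1` bipartite vectors, given by their coefficient matrices
`S s`, with `m` bipartite functionals, given by the matrices `B k`. The functional `B k` acts on the
second factor of `S k` (index `x k`) and the first factor of `S (k + 1)` (index `y k`); the first
factor of `S 0` and the second factor of `S m` remain free. -/
def chainContraction {R n : Type*} [CommSemiring R] [Fintype n] {m : ℕ}
    (S : Fin (m + 1) → Matrix n n R) (B : Fin m → Matrix n n R) : Matrix n n R :=
  Matrix.of fun r l => ∑ x : Fin m → n, ∑ y : Fin m → n,
    (∏ k, B k (x k) (y k)) *
      ∏ s, S s (Fin.cons (α := fun _ => n) r y s) (Fin.snoc (α := fun _ => n) x l s)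

section chainContraction

variable {R n : Type*} [CommSemiring R] [Fintype n] {m : ℕ}

theorem chainContraction_zero (S : Fin 1 → Matrix n n R) (B : Fin 0 → Matrix n n R) :
    chainContraction S B = S 0 := by
  ext r l
  simp [chainContraction, Fin.snoc]

theorem chainContraction_succ (S : Fin (m + 2) → Matrix n n R) (B : Fin (m + 1) → Matrix n n R) :
    chainContraction S B = S 0 * B 0 * chainContraction (Fin.tail S) (Fin.tail B) := by
  ext r l
  calc
    chainContraction S B r l
      = ∑ a, ∑ b, ∑ x : Fin m → n, ∑ y : Fin m → n,
          S 0 r a * B 0 a b * ((∏ k, B k.succ (x k) (y k)) *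
            ∏ s, S s.succ (Fin.cons (α := fun _ => n) b y s)
              (Fin.snoc (α := fun _ => n) x l s)) := by
        simp only [chainContraction, Matrix.of_apply, sum_pi_fin_succ]
        refine Fintype.sum_congr _ _ fun a => ?_
        rw [Finset.sum_comm]
        refine Fintype.sum_congr _ _ fun b => Fintype.sum_congr _ _ fun x =>
          Fintype.sum_congr _ _ fun y => ?_
        rw [Fin.prod_univ_succ, Fin.prod_univ_succ (n := m + 1), ← Fin.cons_snoc_eq_snoc_cons]
        simp only [Fin.cons_zero, Fin.cons_succ]
        ring
    _ = ∑ b, ∑ a, S 0 r a * B 0 a b * chainContraction (Fin.tail S) (Fin.tail B) b l := by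
        simp only [chainContraction, Matrix.of_apply, Finset.mul_sum, Fin.tail]
        exact Finset.sum_comm
    _ = (S 0 * B 0 * chainContraction (Fin.tail S) (Fin.tail B)) r l := by
        simp only [Matrix.mul_apply, Finset.sum_mul]

end chainContraction

theorem antidiagonal_mul_antidiagonal_mul_antidiagonal {R : Type*}
    [NonUnitalNonAssocSemiring R] (p q a b p' q' : R) :
    !![0, p; q, 0] * !![0, a; b, 0] * !![0, p'; q', 0] = !![0, p * b * p'; q * a * q', 0] := by
  simp

theorem stmt_14_general {R : Type*} [CommSemiring R] {m : ℕ}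
    (p q : Fin (m + 1) → R) (a b : Fin m → R) :
    chainContraction (fun s => !![0, p s; q s, 0]) (fun k => !![0, a k; b k, 0]) =
      !![0, (∏ s, p s) * ∏ k, b k; (∏ s, q s) * ∏ k, a k, 0] := by
  induction m with
  | zero => simp [chainContraction_zero]
  | succ m ih =>
    rw [chainContraction_succ]
    simp only [Fin.tail_def, ih, antidiagonal_mul_antidiagonal_mul_antidiagonal,
      Fin.prod_univ_succ (n := m + 1), Fin.prod_univ_succ (f := a), Fin.prod_univ_succ (f := b)]
    rw [mul_mul_mul_comm (p 0), mul_mul_mul_comm (q 0)]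

theorem of_psiPlus : Matrix.of psiPlus = !![0, (√2)⁻¹; (√2)⁻¹, 0] := by
  ext r l
  fin_cases r <;> fin_cases l <;> simp [psiPlus]

theorem of_basisVec_one (u : ℝ) (i : Fin 2) :
    Matrix.of (basisVec u (Outc.one i)) = !![0, uco u i; vco u i, 0] := by
  ext l r
  fin_cases l <;> fin_cases r <;> simp [basisVec]

theorem chainVec_eq_chainContraction (m : ℕ) (u : ℝ) (i : Fin m → Fin 2) (r l : Fin 2) :
    chainVec m u i r l =
      chainContraction (fun _ => Matrix.of psiPlus)
        (fun k => Matrix.of (basisVec u (Outc.one (i k)))) r l := by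
  have cons_eq_dite (y : Fin m → Fin 2) (s : Fin (m + 1)) :
      (Fin.cons r y : Fin (m + 1) → Fin 2) s =
        if hs : (s : ℕ) = 0 then r else y ⟨(s : ℕ) - 1, by have := s.isLt; omega⟩ := by
    cases s using Fin.cases <;> simp
  simp only [chainVec, chainContraction, Matrix.of_apply, cons_eq_dite]
  -- `Fin.snoc x l` unfolds to the second argument of `psiPlus` in `chainVec`.
  rfl

/-- post-selecting the outcomes `1_{i₄},…,1_{i_N}` of the parties
`A₄,…,A_N` on the ring of Bell states leaves the (subnormalized) state
`2^{-(N-2)/2} (v_{i₄}⋯v_{i_N} |01⟩ + u_{i₄}⋯u_{i_N} |10⟩)` on the pair `(R₃, L₁)`. -/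
theorem stmt_14 (N : ℕ) (hN : 4 ≤ N) (u : ℝ) (hu0 : 0 < u) (hu1 : u < 1)
    (i : Fin (N - 3) → Fin 2) (r₃ l₁ : Fin 2) :
    chainVec (N - 3) u i r₃ l₁ =
      ((Real.sqrt 2)⁻¹) ^ (N - 2) *
        (if r₃ = 0 ∧ l₁ = 1 then ∏ k, vco u (i k)
         else if r₃ = 1 ∧ l₁ = 0 then ∏ k, uco u (i k) else 0) := by
  rw [chainVec_eq_chainContraction, of_psiPlus]
  simp only [of_basisVec_one, stmt_14_general, Fin.prod_const, show N - 3 + 1 = N - 2 by omega]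
  fin_cases r₃ <;> fin_cases l₁ <;> simp
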